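/- Let m ≥ 2. Then every eigenvalue of every matrix in S(P_{3m−2} ∨ K₂) has multiplicity at most 3, and q(P_{3m−2} ∨ K₂) = m. -/

import Mathlib

open Matrix Filter

/-- `A ∈ S(G)`: real symmetric matrix whose off-diagonal zero pattern is given by `G`. -/
def inS {V : Type*} (G : SimpleGraph V) (A : Matrix V V ℝ) : Prop :=
  A.IsSymm ∧ ∀ i j : V, i ≠ j → (A i j ≠ 0 ↔ G.Adj i j)

/-- The spectrum of a matrix, as the multiset of roots of its characteristic polynomial. -/
noncomputable def specMultiset {V : Type*} [Fintype V] [DecidableEq V]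
    (A : Matrix V V ℝ) : Multiset ℝ :=
  A.charpoly.roots

/-- The number of distinct eigenvalues of a matrix. -/
noncomputable def qMat {V : Type*} [Fintype V] [DecidableEq V] (A : Matrix V V ℝ) : ℕ :=
  (specMultiset A).toFinset.card

/-- `q(G)`: the minimum number of distinct eigenvalues over matrices in `S(G)`. -/
noncomputable def qGraph {V : Type*} [Fintype V] [DecidableEq V] (G : SimpleGraph V) : ℕ :=
  sInf {q | ∃ A : Matrix V V ℝ, inS G A ∧ qMat A = q}

/-- The strong spectral property. -/
def HasSSP {V : Type*} [Fintype V] [DecidableEq V] (A : Matrix V V ℝ) : Prop :=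
  ∀ X : Matrix V V ℝ, X.IsSymm → A * X = X * A →
    Matrix.hadamard A X = 0 → Matrix.hadamard (1 : Matrix V V ℝ) X = 0 → X = 0

/-- Generic realisability of a multiset of eigenvalues for a graph. -/
def GenericallyRealisable {V : Type*} [Fintype V] [DecidableEq V]
    (G : SimpleGraph V) (σ : Multiset ℝ) : Prop :=
  ∀ Y : Finset (V → ℝ), (∀ y ∈ Y, y ≠ 0) →
    ∃ (d : V → ℝ) (U : Matrix V V ℝ),
      Multiset.map d Finset.univ.val = σ ∧ Uᵀ * U = 1 ∧
      inS G (U * Matrix.diagonal d * Uᵀ) ∧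
      ∀ y ∈ Y, ∀ i, U.mulVec y i ≠ 0

/-- The partial join `(G₁, X) ∨ G₂`: the disjoint union of `G₁` and `G₂` together with all
edges joining vertices of `X ⊆ V(G₁)` to vertices of `G₂`. -/
def partialJoin {α β : Type*} (G₁ : SimpleGraph α) (X : Set α) (G₂ : SimpleGraph β) :
    SimpleGraph (α ⊕ β) where
  Adj x y :=
    (∃ a b, G₁.Adj a b ∧ x = Sum.inl a ∧ y = Sum.inl b) ∨
    (∃ a b, G₂.Adj a b ∧ x = Sum.inr a ∧ y = Sum.inr b) ∨
    (∃ a ∈ X, ∃ b, x = Sum.inl a ∧ y = Sum.inr b) ∨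
    (∃ a ∈ X, ∃ b, x = Sum.inr b ∧ y = Sum.inl a)
  symm := by
    refine ⟨?_⟩
    rintro x y (⟨a, b, hab, rfl, rfl⟩ | ⟨a, b, hab, rfl, rfl⟩ | ⟨a, ha, b, rfl, rfl⟩ |
      ⟨a, ha, b, rfl, rfl⟩)
    · exact Or.inl ⟨b, a, hab.symm, rfl, rfl⟩
    · exact Or.inr (Or.inl ⟨b, a, hab.symm, rfl, rfl⟩)
    · exact Or.inr (Or.inr (Or.inr ⟨a, ha, b, rfl, rfl⟩))
    · exact Or.inr (Or.inr (Or.inl ⟨a, ha, b, rfl, rfl⟩))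
  loopless := by
    refine ⟨?_⟩
    rintro x (⟨a, b, hab, rfl, h⟩ | ⟨a, b, hab, rfl, h⟩ | ⟨a, ha, b, rfl, h⟩ | ⟨a, ha, b, rfl, h⟩)
    · cases h; exact hab.ne rfl
    · cases h; exact hab.ne rfl
    · exact (Sum.inl_ne_inr h).elim
    · exact (Sum.inr_ne_inl h).elim

/-- The join `G₁ ∨ G₂` of two graphs. -/
def graphJoin {α β : Type*} (G₁ : SimpleGraph α) (G₂ : SimpleGraph β) : SimpleGraph (α ⊕ β) :=
  partialJoin G₁ Set.univ G₂

/-- The disjoint union of a family of graphs. -/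
def sigmaGraph {ι : Type*} {α : ι → Type*} (G : ∀ i, SimpleGraph (α i)) :
    SimpleGraph (Σ i, α i) where
  Adj x y := ∃ (i : ι) (a b : α i), (G i).Adj a b ∧ x = ⟨i, a⟩ ∧ y = ⟨i, b⟩
  symm := by
    refine ⟨?_⟩
    rintro x y ⟨i, a, b, hab, rfl, rfl⟩
    exact ⟨i, b, a, hab.symm, rfl, rfl⟩
  loopless := by
    refine ⟨?_⟩
    rintro x ⟨i, a, b, hab, rfl, h⟩
    obtain rfl : a = b := by simpa using h
    exact hab.ne rfl


lemma qr_exists {N : ℕ} (K : Matrix (Fin N) (Fin N) ℝ) (hK : K.det ≠ 0) :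
    ∃ W R : Matrix (Fin N) (Fin N) ℝ, Wᵀ * W = 1 ∧ (∀ i j, j < i → R i j = 0) ∧ R.det ≠ 0 ∧
      K = W * R := by
  let f : Fin N → EuclideanSpace ℝ (Fin N) := fun i => WithLp.toLp 2 (fun j => K j i)
  let bs := InnerProductSpace.gramSchmidtOrthonormalBasis (𝕜 := ℝ) (by simp) f
  let W : Matrix (Fin N) (Fin N) ℝ := fun j i => bs i j
  let R : Matrix (Fin N) (Fin N) ℝ := fun a i => bs.repr (f i) a
  have hKe : K = W * R := by
    ext j i
    have := bs.sum_repr (f i)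
    have h2 := congrArg (fun v : EuclideanSpace ℝ (Fin N) => v j) this
    simp only [WithLp.ofLp_sum, Finset.sum_apply, WithLp.ofLp_smul, Pi.smul_apply, smul_eq_mul] at h2
    rw [Matrix.mul_apply]
    change f i j = _
    rw [← h2]
    exact Finset.sum_congr rfl fun a _ => mul_comm _ _
  refine ⟨W, R, ?_, ?_, ?_, hKe⟩
  · ext a b
    have := orthonormal_iff_ite.mp bs.orthonormal b a
    rw [PiLp.inner_apply] at this
    rw [Matrix.mul_apply, Matrix.one_apply]
    simp only [eq_comm (a := b)] at this
    rw [← this]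
    refine Finset.sum_congr rfl fun x _ => ?_
    change W x a * W x b = _
    simp [W]
  · intro i j hij
    exact InnerProductSpace.gramSchmidtOrthonormalBasis_inv_triangular' _ f hij
  · intro h
    apply hK
    rw [hKe, det_mul, h, mul_zero]

lemma upper_inv {N : ℕ} (R : Matrix (Fin N) (Fin N) ℝ) (hR : ∀ i j, j < i → R i j = 0)
    (hd : R.det ≠ 0) : ∃ X : Matrix (Fin N) (Fin N) ℝ, R * X = 1 ∧ (∀ i j, j < i → X i j = 0) ∧
      (∀ i, X i i ≠ 0) ∧ (∀ i, R i i ≠ 0) := by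
  have hu : IsUnit R.det := isUnit_iff_ne_zero.mpr hd
  have : Invertible R := Matrix.invertibleOfIsUnitDet R hu
  have hX : ∀ i j, j < i → R⁻¹ i j = 0 := by
    have h : R.BlockTriangular id := fun i j h => hR i j h
    exact fun i j h' => blockTriangular_inv_of_blockTriangular h h'
  have hm : R * R⁻¹ = 1 := Matrix.mul_nonsing_inv R hu
  have hdiag : ∀ i, R i i * R⁻¹ i i = 1 := by
    intro i
    have := congrFun (congrFun hm i) i
    rw [Matrix.mul_apply, Matrix.one_apply_eq, Finset.sum_eq_single i] at this
    · exact this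
    · intro b _ hb
      rcases lt_or_gt_of_ne hb with h | h
      · rw [hR _ _ h, zero_mul]
      · rw [hX _ _ h, mul_zero]
    · simp
  exact ⟨R⁻¹, hm, hX, fun i => right_ne_zero_of_mul_eq_one (hdiag i),
    fun i => left_ne_zero_of_mul_eq_one (hdiag i)⟩

/-- Krylov matrix. -/
def kry {N : ℕ} (t c : Fin N → ℝ) : Matrix (Fin N) (Fin N) ℝ := fun j i => c j * t j ^ (i : ℕ)

/-- Padded Gram matrix. -/
def gm {N : ℕ} {A : Type*} [CommRing A] (t β c : Fin N → A) (i : Fin N) : Matrix (Fin N) (Fin N) A :=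
  fun a b => if a < i then ∑ j, c j * t j ^ (a : ℕ) * (c j * t j ^ (b : ℕ)) else
    if a = i then ∑ j, β j * (c j * t j ^ (b : ℕ)) else if a = b then 1 else 0

lemma kry_det {N : ℕ} (t c : Fin N → ℝ) (ht : Function.Injective t) (hc : ∀ j, c j ≠ 0) :
    (kry t c).det ≠ 0 := by
  have : kry t c = diagonal c * vandermonde t := by
    ext i j; simp [kry, vandermonde_apply]
  rw [this, det_mul, det_diagonal]
  exact mul_ne_zero (Finset.prod_ne_zero_iff.mpr fun j _ => hc j)
    (det_vandermonde_ne_zero_iff.mpr ht)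

lemma lanczos_of {N : ℕ} (t c : Fin N → ℝ) (ht : Function.Injective t) (hc : ∀ j, c j ≠ 0) :
    ∃ W : Matrix (Fin N) (Fin N) ℝ, Wᵀ * W = 1 ∧
      (∀ a b : Fin N, a ≠ b → ((Wᵀ * diagonal t * W) a b ≠ 0 ↔
        ((a : ℕ) + 1 = b ∨ (b : ℕ) + 1 = a))) ∧
      ∀ β : Fin N → ℝ, ∀ i, (gm t β c i).det ≠ 0 → (Wᵀ *ᵥ β) i ≠ 0 := by
  obtain ⟨W, R, hW, hR, hRd, hK⟩ := qr_exists (kry t c) (kry_det t c ht hc)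
  obtain ⟨X, hRX, hX, hXd, hRdd⟩ := upper_inv R hR hRd
  have hKX : kry t c * X = W := by rw [hK, Matrix.mul_assoc, hRX, Matrix.mul_one]
  have hWK : Wᵀ * kry t c = R := by rw [hK, ← Matrix.mul_assoc, hW, Matrix.one_mul]
  set H := Wᵀ * diagonal t * W with hH
  have hsymm : ∀ a b, H a b = H b a := by
    intro a b
    have : Hᵀ = H := by
      rw [hH]; simp [Matrix.transpose_mul, Matrix.mul_assoc]
    exact (congrFun (congrFun this b) a)
  -- `Wᵀ T K` columns
  have hcol : ∀ (a b : Fin N) (hb : (b : ℕ) + 1 < N),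
      (Wᵀ * diagonal t * kry t c) a b = R a ⟨b + 1, hb⟩ := by
    intro a b hb
    rw [← hWK, Matrix.mul_assoc, Matrix.mul_apply, Matrix.mul_apply]
    refine Finset.sum_congr rfl fun j _ => ?_
    rw [Matrix.diagonal_mul]
    simp only [kry]
    ring
  have hHX : H = (Wᵀ * diagonal t * kry t c) * X := by
    rw [hH, Matrix.mul_assoc _ (kry t c), hKX]
  have hlow : ∀ a b : Fin N, (b : ℕ) + 1 < a → H a b = 0 := by
    intro a b hab
    rw [hHX, Matrix.mul_apply]
    refine Finset.sum_eq_zero fun l _ => ?_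
    by_cases hl : b < l
    · rw [hX _ _ hl, mul_zero]
    · have h1 : (l : ℕ) ≤ b := by simpa using hl
      rw [hcol a l (by omega), hR _ _ (by rw [Fin.lt_def]; simp; omega), zero_mul]
  have hsub : ∀ a b : Fin N, (b : ℕ) + 1 = a → H a b ≠ 0 := by
    intro a b hab
    rw [hHX, Matrix.mul_apply, Finset.sum_eq_single b]
    · rw [hcol a b (by omega)]
      have : (⟨b + 1, by omega⟩ : Fin N) = a := Fin.ext hab
      rw [this]
      exact mul_ne_zero (hRdd a) (hXd b)
    · intro l _ hl
      by_cases hl' : b < l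
      · rw [hX _ _ hl', mul_zero]
      · have h1 : (l : ℕ) < b := by
          have : l < b := lt_of_le_of_ne (not_lt.mp hl') hl
          exact this
        rw [hcol a l (by omega), hR _ _ (by rw [Fin.lt_def]; simp; omega), zero_mul]
    · simp
  refine ⟨W, hW, ?_, ?_⟩
  · intro a b hab
    have hab' : (a : ℕ) ≠ b := fun h => hab (Fin.ext h)
    constructor
    · intro h
      by_contra hcon
      push Not at hcon
      rcases lt_or_gt_of_ne hab' with h1 | h1
      · exact h ((hsymm a b).trans (hlow b a (by omega)))
      · exact h (hlow a b (by omega))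
    · rintro (h | h)
      · exact fun h0 => hsub b a h ((hsymm b a).trans h0)
      · exact hsub a b h
  · intro β i hdet hz
    apply hdet
    rw [← exists_mulVec_eq_zero_iff]
    refine ⟨fun b => X b i, fun h => hXd i (congrFun h i), ?_⟩
    have key : ∀ u : Fin N → ℝ, ∑ b : Fin N, (∑ j, u j * (c j * t j ^ (b : ℕ))) * X b i
        = ∑ j, u j * W j i := by
      intro u
      simp_rw [← hKX, Matrix.mul_apply, Finset.sum_mul, Finset.mul_sum]
      rw [Finset.sum_comm]
      refine Finset.sum_congr rfl fun j _ => Finset.sum_congr rfl fun b _ => ?_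
      simp only [kry]; ring
    ext a
    rw [Matrix.mulVec, dotProduct, Pi.zero_apply]
    rcases lt_trichotomy a i with h | h | h
    · simp only [gm, if_pos h]
      rw [key (fun j => c j * t j ^ (a : ℕ))]
      have h2 : R i a = 0 := hR _ _ h
      rw [← hWK, Matrix.mul_apply] at h2
      rw [← h2]
      refine Finset.sum_congr rfl fun j _ => ?_
      simp [kry]; ring
    · subst h
      simp only [gm, lt_irrefl, if_false, if_true]
      rw [key, ← hz]
      simp [Matrix.mulVec, dotProduct, mul_comm]
    · simp only [gm, if_neg (not_lt.mpr h.le), if_neg h.ne']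
      simp [hX _ _ h]

lemma gm_exists {N : ℕ} (t β : Fin N → ℝ) (ht : Function.Injective t) (hβ : β ≠ 0) (i : Fin N) :
    ∃ c : Fin N → ℝ, (gm t β c i).det ≠ 0 := by
  obtain ⟨j1, hj1⟩ := Function.ne_iff.mp hβ
  obtain ⟨S, hS, hcard⟩ := Finset.exists_superset_card_eq (s := {j1}) (n := (i : ℕ) + 1)
    (by simp) (by simp)
  have hj1S : j1 ∈ S := hS (by simp)
  -- interpolating polynomial on the complement of `j1`
  let q0 : Polynomial ℝ := Lagrange.interpolate (S.erase j1) t β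
  obtain ⟨c1, hc1, hc1'⟩ : ∃ c1 : ℝ, c1 ≠ 0 ∧ c1 * q0.eval (t j1) ≠ β j1 := by
    by_cases h : 1 * q0.eval (t j1) = β j1
    · refine ⟨2, by norm_num, fun h2 => hj1 ?_⟩
      simp only [Pi.zero_apply]; linarith
    · exact ⟨1, one_ne_zero, h⟩
  let c : Fin N → ℝ := fun j => if j = j1 then c1 else if j ∈ S then 1 else 0
  have hcS : ∀ j ∈ S, c j ≠ 0 := by
    intro j hj; simp only [c]; split_ifs <;> simp [hc1]
  have hcS' : ∀ j, j ∉ S → c j = 0 := by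
    intro j hj
    have : j ≠ j1 := fun h => hj (h ▸ hj1S)
    simp [c, this, hj]
  refine ⟨c, fun hdet => ?_⟩
  obtain ⟨y, hy, hy0⟩ := exists_vecMul_eq_zero_iff.mpr hdet
  let q : Polynomial ℝ := ∑ a ∈ Finset.univ.filter (· < i), Polynomial.monomial (a : ℕ) (y a)
  have hqdeg : q.degree < (i : ℕ) := by
    refine (Polynomial.degree_sum_le _ _).trans_lt ?_
    rw [Finset.sup_lt_iff (WithBot.bot_lt_coe _)]
    intro a ha
    refine (Polynomial.degree_monomial_le _ _).trans_lt ?_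
    have : a < i := by simpa using ha
    exact_mod_cast this
  have hqeval : ∀ x, q.eval x = ∑ a ∈ Finset.univ.filter (· < i), y a * x ^ (a : ℕ) := by
    intro x; simp [q, Polynomial.eval_finsetSum]
  let r : Fin N → ℝ := fun j => q.eval (t j) * c j + y i * β j
  -- equations
  have heq : ∀ b : Fin N, ∑ j, r j * c j * t j ^ (b : ℕ) + (if i < b then y b else 0) = 0 := by
    intro b
    have h := congrFun hy0 b
    rw [Matrix.vecMul, dotProduct, Pi.zero_apply] at h
    rw [← Finset.sum_filter_add_sum_filter_not Finset.univ (· < i)] at h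
    have e1 : ∑ a ∈ Finset.univ.filter (· < i), y a * gm t β c i a b
        = ∑ j, q.eval (t j) * c j * (c j * t j ^ (b : ℕ)) := by
      simp_rw [hqeval, Finset.sum_mul]
      rw [Finset.sum_comm]
      refine Finset.sum_congr rfl fun a ha => ?_
      have : a < i := by simpa using ha
      simp only [gm, if_pos this, Finset.mul_sum]
      refine Finset.sum_congr rfl fun j _ => ?_
      ring
    have e2 : ∑ a ∈ Finset.univ.filter (fun a => ¬ a < i), y a * gm t β c i a b
        = y i * (∑ j, β j * (c j * t j ^ (b : ℕ))) + (if i < b then y b else 0) := by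
      rw [← Finset.add_sum_erase _ _ (show i ∈ Finset.univ.filter (fun a => ¬ a < i) by simp)]
      congr 1
      · simp [gm]
      · have : ∀ a ∈ (Finset.univ.filter (fun a => ¬ a < i)).erase i,
            y a * gm t β c i a b = if a = b then y b else 0 := by
          intro a ha
          simp only [Finset.mem_erase, Finset.mem_filter] at ha
          simp only [gm, if_neg ha.2.2, if_neg ha.1]
          split_ifs with h
          · rw [h]; simp
          · simp
        rw [Finset.sum_congr rfl this, Finset.sum_ite_eq']
        congr 1
        simp only [Finset.mem_erase, Finset.mem_filter, Finset.mem_univ, true_and, eq_iff_iff]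
        rw [not_lt]
        exact ⟨fun h => lt_of_le_of_ne h.2 (Ne.symm h.1), fun h => ⟨h.ne', h.le⟩⟩
    rw [e1, e2, ← add_assoc, Finset.mul_sum, ← Finset.sum_add_distrib] at h
    refine Eq.trans ?_ h
    congr 1
    refine Finset.sum_congr rfl fun j _ => ?_
    simp only [r]; ring
  have hpoly : ∀ P : Polynomial ℝ, P.natDegree < (i : ℕ) + 1 → ∑ j, r j * c j * P.eval (t j) = 0 := by
    intro P hP
    simp_rw [Polynomial.eval_eq_sum_range' hP, Finset.mul_sum]
    rw [Finset.sum_comm]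
    refine Finset.sum_eq_zero fun b hb => ?_
    have hb' : b < (i : ℕ) + 1 := by simpa using hb
    have h := heq ⟨b, by omega⟩
    rw [if_neg (by rw [Fin.lt_def]; simp; omega), add_zero] at h
    simp only at h
    calc _ = P.coeff b * ∑ j, r j * c j * t j ^ b := by
          rw [Finset.mul_sum]; exact Finset.sum_congr rfl fun j _ => by ring
      _ = 0 := by rw [h, mul_zero]
  have hr : ∀ j ∈ S, r j = 0 := by
    intro j0 hj0
    have h := hpoly (∏ l ∈ S.erase j0, (Polynomial.X - Polynomial.C (t l))) (by
      rw [Polynomial.natDegree_prod_of_monic _ _ (fun l _ => Polynomial.monic_X_sub_C _)]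
      simp [Finset.card_erase_of_mem hj0, hcard])
    rw [Finset.sum_eq_single j0] at h
    · have hne : (∏ l ∈ S.erase j0, (Polynomial.X - Polynomial.C (t l))).eval (t j0) ≠ 0 := by
        rw [Polynomial.eval_prod, Finset.prod_ne_zero_iff]
        intro l hl
        simp only [Polynomial.eval_sub, Polynomial.eval_X, Polynomial.eval_C]
        exact sub_ne_zero.mpr fun h' => (Finset.ne_of_mem_erase hl) (ht h').symm
      have := (mul_eq_zero.mp h).resolve_right hne
      exact (mul_eq_zero.mp this).resolve_right (hcS j0 hj0)
    · intro j _ hj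
      by_cases hjS : j ∈ S
      · rw [Polynomial.eval_prod, Finset.prod_eq_zero (i := j)]
        · simp
        · simp [hj, hjS]
        · simp
      · rw [hcS' j hjS]; simp
    · simp
  have hcardE : (S.erase j1).card = i := by rw [Finset.card_erase_of_mem hj1S, hcard]; simp
  by_cases hs : y i = 0
  · have hq : q = 0 := by
      refine Polynomial.eq_zero_of_degree_lt_of_eval_index_eq_zero (v := t) S ht.injOn
        (hqdeg.trans (by rw [hcard]; exact_mod_cast Nat.lt_succ_self _)) ?_
      intro j hj
      have := hr j hj
      simp only [r, hs, zero_mul, add_zero] at this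
      exact (mul_eq_zero.mp this).resolve_right (hcS j hj)
    apply hy
    ext b
    rw [Pi.zero_apply]
    rcases lt_trichotomy b i with h | h | h
    · have := congrArg (fun p => Polynomial.coeff p (b : ℕ)) hq
      simp only [q, Polynomial.finsetSum_coeff, Polynomial.coeff_monomial, Polynomial.coeff_zero] at this
      rw [Finset.sum_eq_single b] at this
      · simpa using this
      · intro a _ hab; rw [if_neg]; exact fun h' => hab (Fin.ext h')
      · intro h'; exact absurd (by simp [h]) h'
    · rw [h, hs]
    · have := heq b
      simpa [r, hq, hs, h] using this
  · have hq : Polynomial.C (-(y i)⁻¹) * q = q0 := by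
      refine Polynomial.eq_of_degrees_lt_of_eval_index_eq (v := t) (S.erase j1) ht.injOn ?_ ?_ ?_
      · rw [hcardE]
        rw [Polynomial.degree_C_mul (neg_ne_zero.mpr (inv_ne_zero hs))]; exact hqdeg
      · exact Lagrange.degree_interpolate_lt _ ht.injOn
      · intro j hj
        rw [Lagrange.eval_interpolate_at_node _ ht.injOn hj]
        have h := hr j (Finset.mem_of_mem_erase hj)
        have hcj : c j = 1 := by
          simp [c, Finset.ne_of_mem_erase hj, Finset.mem_of_mem_erase hj]
        simp only [r, hcj] at h
        simp only [Polynomial.eval_mul, Polynomial.eval_C]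
        field_simp
        linarith
    apply hc1'
    have h := hr j1 hj1S
    have hcj : c j1 = c1 := by simp [c]
    simp only [r, hcj] at h
    rw [← hq]
    simp only [Polynomial.eval_mul, Polynomial.eval_C]
    field_simp
    linarith

lemma gm_eval {N : ℕ} (t β : Fin N → ℝ) (i : Fin N) (c : Fin N → ℝ) :
    MvPolynomial.eval c (gm (fun j => MvPolynomial.C (t j)) (fun j => MvPolynomial.C (β j))
      (fun j : Fin N => MvPolynomial.X j) i).det = (gm t β c i).det := by
  rw [RingHom.map_det]
  congr 1
  ext a b
  simp only [RingHom.mapMatrix_apply, Matrix.map_apply, gm]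
  split_ifs <;> simp

lemma lanczos {N : ℕ} (t β₁ β₂ : Fin N → ℝ) (ht : Function.Injective t)
    (h₁ : β₁ ≠ 0) (h₂ : β₂ ≠ 0) :
    ∃ W : Matrix (Fin N) (Fin N) ℝ, Wᵀ * W = 1 ∧
      (∀ a b : Fin N, a ≠ b → ((Wᵀ * diagonal t * W) a b ≠ 0 ↔
        ((a : ℕ) + 1 = b ∨ (b : ℕ) + 1 = a))) ∧
      (∀ i, (Wᵀ *ᵥ β₁) i ≠ 0) ∧ (∀ i, (Wᵀ *ᵥ β₂) i ≠ 0) := by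
  let F : (Fin N → ℝ) → Fin N → MvPolynomial (Fin N) ℝ := fun β i =>
    (gm (fun j => MvPolynomial.C (t j)) (fun j => MvPolynomial.C (β j))
      (fun j : Fin N => MvPolynomial.X j) i).det
  have hF : ∀ β, β ≠ 0 → ∀ i, F β i ≠ 0 := by
    intro β hβ i h
    obtain ⟨c, hc⟩ := gm_exists t β ht hβ i
    apply hc
    rw [← gm_eval]
    change MvPolynomial.eval c (F β i) = 0
    rw [h, map_zero]
  let P : MvPolynomial (Fin N) ℝ := ∏ i, (F β₁ i * F β₂ i * MvPolynomial.X i)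
  have hP : P ≠ 0 := Finset.prod_ne_zero_iff.mpr fun i _ =>
    mul_ne_zero (mul_ne_zero (hF _ h₁ i) (hF _ h₂ i)) (MvPolynomial.X_ne_zero i)
  obtain ⟨c, hc⟩ : ∃ c, MvPolynomial.eval c P ≠ 0 := by
    by_contra h
    push Not at h
    exact hP (MvPolynomial.funext fun x => by rw [h x, map_zero])
  rw [map_prod, Finset.prod_ne_zero_iff] at hc
  have hc1 : ∀ i, (gm t β₁ c i).det ≠ 0 ∧ (gm t β₂ c i).det ≠ 0 ∧ c i ≠ 0 := by
    intro i
    have := hc i (Finset.mem_univ i)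
    rw [map_mul, map_mul, MvPolynomial.eval_X] at this
    simp only [F, gm_eval] at this
    exact ⟨left_ne_zero_of_mul (left_ne_zero_of_mul this),
      right_ne_zero_of_mul (left_ne_zero_of_mul this), right_ne_zero_of_mul this⟩
  obtain ⟨W, hW, hT, hb⟩ := lanczos_of t c ht fun j => (hc1 j).2.2
  exact ⟨W, hW, hT, fun i => hb _ i (hc1 i).1, fun i => hb _ i (hc1 i).2.1⟩

lemma arrow_identity (k : ℕ) (θ : Fin (k + 1) → ℝ) (hinj : Function.Injective θ) (s : Fin (k + 1) → ℝ)
    (hs : ∀ j, ∏ i : Fin (k + 2), (θ j - (i : ℝ)) = - s j * ∏ l ∈ Finset.univ.erase j, (θ j - θ l))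
    (μ : ℝ) :
    ∏ i : Fin (k + 2), (μ - (i : ℝ)) =
      (μ - (∑ i : Fin (k + 2), (i : ℝ) - ∑ j, θ j)) * ∏ j, (μ - θ j)
      - ∑ j, s j * ∏ l ∈ Finset.univ.erase j, (μ - θ l) := by
  set c := ∑ i : Fin (k + 2), (i : ℝ) - ∑ j, θ j with hc
  let L : Polynomial ℝ := ∏ i : Fin (k + 2), (Polynomial.X - Polynomial.C (i : ℝ))
  let Q : Polynomial ℝ := (Polynomial.X - Polynomial.C c) * ∏ j, (Polynomial.X - Polynomial.C (θ j))
  let E : Polynomial ℝ := ∑ j, Polynomial.C (s j) *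
    ∏ l ∈ Finset.univ.erase j, (Polynomial.X - Polynomial.C (θ l))
  have hΘm : (∏ j, (Polynomial.X - Polynomial.C (θ j))).Monic :=
    Polynomial.monic_prod_of_monic _ _ fun l _ => Polynomial.monic_X_sub_C _
  have hLm : L.Monic := Polynomial.monic_prod_of_monic _ _ fun l _ => Polynomial.monic_X_sub_C _
  have hQm : Q.Monic := (Polynomial.monic_X_sub_C _).mul hΘm
  have hLd : L.natDegree = k + 2 := by
    rw [Polynomial.natDegree_prod_of_monic _ _ (fun l _ => Polynomial.monic_X_sub_C _)]
    simp only [Polynomial.natDegree_X_sub_C]; simp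
  have hΘd : (∏ j, (Polynomial.X - Polynomial.C (θ j))).natDegree = k + 1 := by
    rw [Polynomial.natDegree_prod_of_monic _ _ (fun l _ => Polynomial.monic_X_sub_C _)]; simp
  have hQd : Q.natDegree = k + 2 := by
    rw [Polynomial.Monic.natDegree_mul (Polynomial.monic_X_sub_C _) hΘm, hΘd]; simp; omega
  have hLn : L.nextCoeff = - ∑ i : Fin (k + 2), (i : ℝ) :=
    Polynomial.prod_X_sub_C_nextCoeff _
  have hQn : Q.nextCoeff = - ∑ i : Fin (k + 2), (i : ℝ) := by
    rw [Polynomial.Monic.nextCoeff_mul (Polynomial.monic_X_sub_C _) hΘm,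
      Polynomial.prod_X_sub_C_nextCoeff, Polynomial.nextCoeff_X_sub_C, hc]
    ring
  rw [Polynomial.nextCoeff_of_natDegree_pos (by omega), hLd] at hLn
  rw [Polynomial.nextCoeff_of_natDegree_pos (by omega), hQd] at hQn
  have hLQ : (L - Q).degree < ((k + 1 : ℕ) : WithBot ℕ) := by
    rw [Polynomial.degree_lt_iff_coeff_zero]
    intro n hn
    rw [Polynomial.coeff_sub]
    rcases Nat.lt_or_ge (k + 2) n with h | h
    · rw [Polynomial.coeff_eq_zero_of_natDegree_lt (by omega),
        Polynomial.coeff_eq_zero_of_natDegree_lt (by omega), sub_zero]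
    · rcases Nat.eq_or_lt_of_le hn with h1 | h1
      · subst h1
        have e : k + 2 - 1 = k + 1 := by omega
        rw [e] at hLn hQn
        rw [hLn, hQn, sub_self]
      · obtain rfl : n = k + 2 := by omega
        have a := hLm.coeff_natDegree
        have b := hQm.coeff_natDegree
        rw [hLd] at a
        rw [hQd] at b
        rw [a, b, sub_self]
  have hE : E.degree < ((k + 1 : ℕ) : WithBot ℕ) := by
    refine (Polynomial.degree_sum_le _ _).trans_lt ?_
    rw [Finset.sup_lt_iff (WithBot.bot_lt_coe _)]
    intro j _
    refine (show _ ≤ (∏ l ∈ Finset.univ.erase j, (Polynomial.X - Polynomial.C (θ l))).degree from ?_).trans_lt ?_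
    · rw [← Polynomial.smul_eq_C_mul]; exact Polynomial.degree_smul_le _ _
    rw [Polynomial.degree_eq_natDegree
      (Polynomial.monic_prod_of_monic _ _ fun l _ => Polynomial.monic_X_sub_C _).ne_zero,
      Polynomial.natDegree_prod_of_monic _ _ (fun l _ => Polynomial.monic_X_sub_C _)]
    simp [Finset.card_erase_of_mem]
    exact_mod_cast Nat.lt_succ_self k
  have hD : L - Q + E = 0 := by
    refine Polynomial.eq_zero_of_degree_lt_of_eval_index_eq_zero (v := θ) Finset.univ hinj.injOn
      ((Polynomial.degree_add_le _ _).trans_lt (by simpa using ⟨hLQ, hE⟩)) ?_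
    intro j _
    have h1 : Q.eval (θ j) = 0 := by
      simp only [Q, Polynomial.eval_mul, Polynomial.eval_prod]
      rw [Finset.prod_eq_zero (Finset.mem_univ j) (by simp), mul_zero]
    have h2 : E.eval (θ j) = s j * ∏ l ∈ Finset.univ.erase j, (θ j - θ l) := by
      simp only [E, Polynomial.eval_finsetSum, Polynomial.eval_mul, Polynomial.eval_prod,
        Polynomial.eval_C, Polynomial.eval_sub, Polynomial.eval_X]
      rw [Finset.sum_eq_single j]
      · intro l _ hl
        rw [Finset.prod_eq_zero (i := j), mul_zero]
        · simp [hl.symm]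
        · simp
      · simp
    have h3 : L.eval (θ j) = ∏ i : Fin (k + 2), (θ j - (i : ℝ)) := by
      simp [L, Polynomial.eval_prod]
    rw [Polynomial.eval_add, Polynomial.eval_sub, h1, h2, h3, hs]; ring
  have := congrArg (Polynomial.eval μ) hD
  simp only [L, Q, E, Polynomial.eval_add, Polynomial.eval_finsetSum, Polynomial.eval_mul,
    Polynomial.eval_prod, Polynomial.eval_C, Polynomial.eval_sub, Polynomial.eval_X,
    Polynomial.eval_zero] at this
  linarith

lemma arrow_pos (k : ℕ) (θ : Fin (k + 1) → ℝ) (hθ : ∀ j : Fin (k + 1), (j : ℝ) < θ j ∧ θ j < (j : ℝ) + 1)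
    (j : Fin (k + 1)) : ∃ s : ℝ, 0 < s ∧
    ∏ i : Fin (k + 2), (θ j - (i : ℝ)) = - s * ∏ l ∈ Finset.univ.erase j, (θ j - θ l) := by
  have hne : ∀ l ∈ Finset.univ.erase j,
      0 < (θ j - ((j.castSucc.succAbove l : Fin (k + 2)) : ℝ)) / (θ j - θ l) := by
    intro l hl
    have hlj := Finset.ne_of_mem_erase hl
    have hj := hθ j
    have hl' := hθ l
    rcases lt_or_gt_of_ne hlj with h | h
    · rw [Fin.succAbove_of_castSucc_lt _ _ (by simpa using h)]
      have h2 : ((l : ℕ) : ℝ) + 1 ≤ (j : ℕ) := by exact_mod_cast h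
      simp only [Fin.val_castSucc]
      apply div_pos <;> linarith
    · rw [Fin.succAbove_of_le_castSucc _ _ (by simpa using h.le)]
      have h2 : ((j : ℕ) : ℝ) + 1 ≤ (l : ℕ) := by exact_mod_cast h
      simp only [Fin.val_succ]
      push_cast
      apply div_pos_of_neg_of_neg <;> linarith
  refine ⟨(θ j - j) * (j + 1 - θ j) *
    ∏ l ∈ Finset.univ.erase j, (θ j - ((j.castSucc.succAbove l : Fin (k + 2)) : ℝ)) / (θ j - θ l),
    mul_pos (mul_pos (by linarith [(hθ j).1]) (by linarith [(hθ j).2])) (Finset.prod_pos hne), ?_⟩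
  rw [Fin.prod_univ_succAbove _ j.castSucc,
    ← Finset.mul_prod_erase Finset.univ _ (Finset.mem_univ j),
    Fin.succAbove_castSucc_self, neg_mul, mul_assoc, ← Finset.prod_mul_distrib]
  have : ∀ l ∈ Finset.univ.erase j,
      (θ j - ((j.castSucc.succAbove l : Fin (k + 2)) : ℝ)) / (θ j - θ l) * (θ j - θ l) =
        (θ j - ((j.castSucc.succAbove l : Fin (k + 2)) : ℝ)) := by
    intro l hl
    have h := hne l hl
    refine div_mul_cancel₀ _ fun h0 => ?_
    rw [h0, div_zero] at h
    exact lt_irrefl _ h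
  rw [Finset.prod_congr rfl this]
  simp
  ring

lemma arrow (k : ℕ) (θ : Fin (k + 1) → ℝ) (hθ : ∀ j : Fin (k + 1), (j : ℝ) < θ j ∧ θ j < (j : ℝ) + 1) :
    ∃ b : Fin (k + 1) → ℝ, (∀ j, b j ≠ 0) ∧ ∀ (μ : ℝ) (y : Fin (k + 1) → ℝ) (z : ℝ),
      (∀ j, θ j * y j + b j * z = μ * y j) →
      (∑ j, b j * y j + (∑ i : Fin (k + 2), (i : ℝ) - ∑ j, θ j) * z = μ * z) →
      (z ≠ 0 ∨ ∃ j, y j ≠ 0) → ∃ i : Fin (k + 2), μ = (i : ℝ) := by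
  have hinj : Function.Injective θ := by
    intro j l h
    by_contra hne
    have hj := hθ j
    have hl' := hθ l
    rcases lt_or_gt_of_ne hne with h1 | h1
    · have h2 : ((j : ℕ) : ℝ) + 1 ≤ (l : ℕ) := by exact_mod_cast h1
      linarith
    · have h2 : ((l : ℕ) : ℝ) + 1 ≤ (j : ℕ) := by exact_mod_cast h1
      linarith
  choose s hs hsp using arrow_pos k θ hθ
  refine ⟨fun j => Real.sqrt (s j), fun j => (Real.sqrt_pos.mpr (hs j)).ne', ?_⟩
  intro μ y z h1 h2 h3
  dsimp only at h1 h2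
  have hb : ∀ j, Real.sqrt (s j) ≠ 0 := fun j => (Real.sqrt_pos.mpr (hs j)).ne'
  have hbs : ∀ j, Real.sqrt (s j) * Real.sqrt (s j) = s j := fun j => Real.mul_self_sqrt (hs j).le
  by_cases hz : z = 0
  · exfalso
    subst hz
    obtain ⟨j, hj⟩ := h3.resolve_left (by simp)
    have hμ : μ = θ j := by
      have := h1 j
      simp only [mul_zero, add_zero] at this
      exact (mul_right_cancel₀ hj this).symm
    simp only [mul_zero, add_zero] at h2
    rw [Finset.sum_eq_single j] at h2
    · exact mul_ne_zero (hb j) hj h2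
    · intro l _ hl
      have := h1 l
      simp only [mul_zero, add_zero, hμ] at this
      by_cases hy : y l = 0
      · rw [hy, mul_zero]
      · exact absurd (hinj (mul_right_cancel₀ hy this)) hl
    · simp
  · have hid := arrow_identity k θ hinj s hsp μ
    have h0 : z * ∏ i : Fin (k + 2), (μ - (i : ℝ)) = 0 := by
      rw [hid]
      have e : ∑ j, Real.sqrt (s j) * y j * ∏ j, (μ - θ j)
          = z * ∑ j, s j * ∏ l ∈ Finset.univ.erase j, (μ - θ l) := by
        rw [Finset.mul_sum]
        refine Finset.sum_congr rfl fun j _ => ?_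
        rw [← Finset.mul_prod_erase Finset.univ (fun j => μ - θ j) (Finset.mem_univ j)]
        linear_combination (- Real.sqrt (s j) * ∏ l ∈ Finset.univ.erase j, (μ - θ l)) * h1 j +
          (z * ∏ l ∈ Finset.univ.erase j, (μ - θ l)) * hbs j
      rw [mul_sub, ← e, ← Finset.sum_mul]
      linear_combination (- ∏ j, (μ - θ j)) * h2
    obtain ⟨i, _, hi⟩ := Finset.prod_eq_zero_iff.mp ((mul_eq_zero.mp h0).resolve_left hz)
    exact ⟨i, by linarith⟩

lemma join_ll {α β : Type*} (G : SimpleGraph α) (H : SimpleGraph β) (a b : α) :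
    (graphJoin G H).Adj (Sum.inl a) (Sum.inl b) ↔ G.Adj a b := by
  simp [graphJoin, partialJoin]

lemma join_rr {α β : Type*} (G : SimpleGraph α) (H : SimpleGraph β) (a b : β) :
    (graphJoin G H).Adj (Sum.inr a) (Sum.inr b) ↔ H.Adj a b := by
  simp [graphJoin, partialJoin]

lemma join_lr {α β : Type*} (G : SimpleGraph α) (H : SimpleGraph β) (a : α) (b : β) :
    (graphJoin G H).Adj (Sum.inl a) (Sum.inr b) := by
  simp [graphJoin, partialJoin]

lemma join_rl {α β : Type*} (G : SimpleGraph α) (H : SimpleGraph β) (a : α) (b : β) :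
    (graphJoin G H).Adj (Sum.inr b) (Sum.inl a) := by
  simp [graphJoin, partialJoin]

lemma ker_zero {N : ℕ} (hN : 0 < N) (A : Matrix (Fin N ⊕ Fin 2) (Fin N ⊕ Fin 2) ℝ)
    (hA : inS (graphJoin (SimpleGraph.pathGraph N) (⊤ : SimpleGraph (Fin 2))) A) (μ : ℝ)
    (x : Fin N ⊕ Fin 2 → ℝ) (hx : A *ᵥ x = μ • x) (h0 : x (Sum.inl ⟨0, hN⟩) = 0)
    (h1 : ∀ j, x (Sum.inr j) = 0) : x = 0 := by
  have key : ∀ n : ℕ, ∀ hn : n < N, x (Sum.inl ⟨n, hn⟩) = 0 := by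
    intro n
    induction n using Nat.strong_induction_on with
    | _ n ih =>
      intro hn
      rcases Nat.eq_zero_or_pos n with rfl | hpos
      · exact h0
      obtain ⟨p, rfl⟩ : ∃ p, n = p + 1 := ⟨n - 1, by omega⟩
      have hp := congrFun hx (Sum.inl ⟨p, by omega⟩)
      rw [Matrix.mulVec, dotProduct, Fintype.sum_sum_type, Pi.smul_apply,
        ih p (by omega) (by omega), smul_zero, Finset.sum_eq_zero (s := (Finset.univ : Finset (Fin 2)))
          (fun j _ => by rw [h1 j, mul_zero]), add_zero,
        Finset.sum_eq_single (⟨p + 1, hn⟩ : Fin N)] at hp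
      · refine (mul_eq_zero.mp hp).resolve_left ?_
        refine (hA.2 _ _ (by simp)).mpr ?_
        rw [join_ll, SimpleGraph.pathGraph_adj]
        simp
      · intro b _ hb
        rcases Nat.lt_or_ge (b : ℕ) (p + 1) with h | h
        · rw [show b = ⟨(b : ℕ), b.2⟩ from rfl, ih b h b.2, mul_zero]
        · have hbn : (b : ℕ) ≠ p + 1 := fun h' => hb (Fin.ext h')
          have : A (Sum.inl ⟨p, by omega⟩) (Sum.inl b) = 0 := by
            by_contra hne
            rw [← ne_eq, hA.2 _ _ (by simp [Fin.ext_iff]; omega), join_ll,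
              SimpleGraph.pathGraph_adj] at hne
            simp at hne
            omega
          rw [this, zero_mul]
      · simp
  ext v
  rcases v with ⟨n, hn⟩ | j
  · exact key n hn
  · exact h1 j

lemma mult_le {N : ℕ} (hN : 0 < N) (A : Matrix (Fin N ⊕ Fin 2) (Fin N ⊕ Fin 2) ℝ)
    (hA : inS (graphJoin (SimpleGraph.pathGraph N) (⊤ : SimpleGraph (Fin 2))) A) (μ : ℝ) :
    Multiset.count μ (specMultiset A) ≤ 3 ∧ Multiset.card (specMultiset A) = N + 2 := by
  have hH : A.IsHermitian := by
    rw [Matrix.IsHermitian, Matrix.conjTranspose_eq_transpose_of_trivial]; exact hA.1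
  have hroots : specMultiset A = Multiset.map hH.eigenvalues Finset.univ.val := by
    rw [specMultiset, hH.roots_charpoly_eq_eigenvalues]
    rfl
  refine ⟨?_, by rw [hroots]; simp⟩
  rw [hroots, Multiset.count_map]
  let T := {i // hH.eigenvalues i = μ}
  have hcard : Multiset.card (Multiset.filter (fun a => μ = hH.eigenvalues a) Finset.univ.val)
      = Fintype.card T := by
    rw [Fintype.card_subtype, Finset.card_def, Finset.filter_val]
    simp only [eq_comm]
  rw [hcard]
  let v : T → EuclideanSpace ℝ (Fin N ⊕ Fin 2) := fun i => hH.eigenvectorBasis i.1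
  have hv : LinearIndependent ℝ v :=
    hH.eigenvectorBasis.orthonormal.linearIndependent.comp _ Subtype.val_injective
  let lc : (T → ℝ) →ₗ[ℝ] EuclideanSpace ℝ (Fin N ⊕ Fin 2) := Fintype.linearCombination ℝ v
  let pr : EuclideanSpace ℝ (Fin N ⊕ Fin 2) →ₗ[ℝ] (Fin 1 ⊕ Fin 2 → ℝ) :=
    { toFun := fun x s => x (Sum.map (fun _ => ⟨0, hN⟩) id s)
      map_add' := fun x y => by ext s; simp
      map_smul' := fun r x => by ext s; simp }
  have hinj : Function.Injective (pr ∘ₗ lc) := by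
    rw [← LinearMap.ker_eq_bot, LinearMap.ker_eq_bot']
    intro α hα
    have hx0 : (fun s => (lc α) s) = (0 : Fin N ⊕ Fin 2 → ℝ) := by
      refine ker_zero hN A hA μ _ ?_ ?_ ?_
      · have : ∀ i : T, A *ᵥ (v i : Fin N ⊕ Fin 2 → ℝ) = μ • (v i : Fin N ⊕ Fin 2 → ℝ) := by
          intro i
          have := hH.mulVec_eigenvectorBasis i.1
          rw [i.2] at this
          exact this
        have e : (fun s => (lc α) s) = ∑ i, α i • (v i : Fin N ⊕ Fin 2 → ℝ) := by
          ext s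
          simp [lc, Fintype.linearCombination_apply]
        rw [e, Matrix.mulVec_sum, Finset.smul_sum]
        refine Finset.sum_congr rfl fun i _ => ?_
        rw [Matrix.mulVec_smul, this, smul_comm]
      · exact congrFun hα (Sum.inl 0)
      · intro j; exact congrFun hα (Sum.inr j)
    have hlc : lc α = 0 := by
      ext s; exact congrFun hx0 s
    have := Fintype.linearIndependent_iff.mp hv α (by
      rw [← hlc, Fintype.linearCombination_apply])
    exact funext this
  have := LinearMap.finrank_le_finrank_of_injective hinj
  simpa using this

lemma exists_good (k : ℕ) :
    ∃ A : Matrix (Fin (3 * (k + 2) - 2) ⊕ Fin 2) (Fin (3 * (k + 2) - 2) ⊕ Fin 2) ℝ,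
      inS (graphJoin (SimpleGraph.pathGraph (3 * (k + 2) - 2)) (⊤ : SimpleGraph (Fin 2))) A ∧
      ∀ μ ∈ specMultiset A, ∃ i : Fin (k + 2), μ = (i : ℝ) := by
  set N := 3 * (k + 2) - 2 with hN
  let θ : Fin (k + 1) → ℝ := fun j => (j : ℝ) + 1 / 3
  let θ' : Fin (k + 1) → ℝ := fun j => (j : ℝ) + 2 / 3
  obtain ⟨b, hb, harr⟩ := arrow k θ fun j => by constructor <;> simp only [θ] <;> linarith
  obtain ⟨b', hb', harr'⟩ := arrow k θ' fun j => by constructor <;> simp only [θ'] <;> linarith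
  set c := ∑ i : Fin (k + 2), (i : ℝ) - ∑ j, θ j with hc
  set c' := ∑ i : Fin (k + 2), (i : ℝ) - ∑ j, θ' j with hc'
  have hcc : c - c' ≠ 0 := by
    have : c - c' = ((k : ℝ) + 1) / 3 := by
      rw [hc, hc']
      have : ∑ j, θ' j = ∑ j, θ j + ((k : ℝ) + 1) / 3 := by
        have h : ∀ j, θ' j = θ j + 1 / 3 := fun j => by simp only [θ, θ']; ring
        simp_rw [h]
        rw [Finset.sum_add_distrib]
        simp
        ring
      rw [this]; ring
    rw [this]; positivity
  let e : Fin N ≃ Fin (k + 2) ⊕ (Fin (k + 1) ⊕ Fin (k + 1)) :=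
    Fintype.equivOfCardEq (by simp [hN]; omega)
  let t0 : Fin (k + 2) ⊕ (Fin (k + 1) ⊕ Fin (k + 1)) → ℝ :=
    Sum.elim (fun i => (i : ℝ)) (Sum.elim θ θ')
  have ht0 : Function.Injective t0 := by
    rintro (i | i | i) (j | j | j) h <;> simp only [t0, θ, θ', Sum.elim_inl, Sum.elim_inr] at h
    · have : (i : ℕ) = j := by exact_mod_cast h
      rw [Fin.ext this]
    · exfalso
      have : ((3 * (i : ℕ) : ℕ) : ℝ) = ((3 * (j : ℕ) + 1 : ℕ) : ℝ) := by push_cast; linarith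
      have := Nat.cast_injective this
      omega
    · exfalso
      have : ((3 * (i : ℕ) : ℕ) : ℝ) = ((3 * (j : ℕ) + 2 : ℕ) : ℝ) := by push_cast; linarith
      have := Nat.cast_injective this
      omega
    · exfalso
      have : ((3 * (i : ℕ) + 1 : ℕ) : ℝ) = ((3 * (j : ℕ) : ℕ) : ℝ) := by push_cast; linarith
      have := Nat.cast_injective this
      omega
    · have : (i : ℕ) = j := by exact_mod_cast (add_right_cancel h)
      rw [Fin.ext this]
    · exfalso
      have : ((3 * (i : ℕ) + 1 : ℕ) : ℝ) = ((3 * (j : ℕ) + 2 : ℕ) : ℝ) := by push_cast; linarith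
      have := Nat.cast_injective this
      omega
    · exfalso
      have : ((3 * (i : ℕ) + 2 : ℕ) : ℝ) = ((3 * (j : ℕ) : ℕ) : ℝ) := by push_cast; linarith
      have := Nat.cast_injective this
      omega
    · exfalso
      have : ((3 * (i : ℕ) + 2 : ℕ) : ℝ) = ((3 * (j : ℕ) + 1 : ℕ) : ℝ) := by push_cast; linarith
      have := Nat.cast_injective this
      omega
    · have : (i : ℕ) = j := by exact_mod_cast (add_right_cancel h)
      rw [Fin.ext this]
  let t : Fin N → ℝ := t0 ∘ e
  let g₁ : Fin (k + 2) ⊕ (Fin (k + 1) ⊕ Fin (k + 1)) → ℝ :=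
    Sum.elim 0 (Sum.elim (fun j => 3 / 5 * b j) (fun j => 4 / 5 * b' j))
  let g₂ : Fin (k + 2) ⊕ (Fin (k + 1) ⊕ Fin (k + 1)) → ℝ :=
    Sum.elim 0 (Sum.elim (fun j => 4 / 5 * b j) (fun j => - 3 / 5 * b' j))
  have h₁ : g₁ ∘ e ≠ 0 := by
    intro h
    have := congrFun h (e.symm (Sum.inr (Sum.inl 0)))
    simp [g₁, hb] at this
  have h₂ : g₂ ∘ e ≠ 0 := by
    intro h
    have := congrFun h (e.symm (Sum.inr (Sum.inl 0)))
    simp [g₂, hb] at this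
  obtain ⟨W, hW, hT, hw₁, hw₂⟩ := lanczos t (g₁ ∘ e) (g₂ ∘ e) (ht0.comp e.injective) h₁ h₂
  have hW' : W * Wᵀ = 1 := mul_eq_one_comm.mp hW
  let B : Matrix (Fin N) (Fin 2) ℝ := fun j s => ![g₁ (e j), g₂ (e j)] s
  let C : Matrix (Fin 2) (Fin 2) ℝ :=
    !![(9 * c + 16 * c') / 25, 12 * (c - c') / 25; 12 * (c - c') / 25, (16 * c + 9 * c') / 25]
  have hB : ∀ i s, (Wᵀ * B) i s ≠ 0 := by
    intro i s
    fin_cases s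
    · exact hw₁ i
    · exact hw₂ i
  have hCs : Cᵀ = C := by
    ext i j; fin_cases i <;> fin_cases j <;> rfl
  have hC : ∀ i j, i ≠ j → C i j ≠ 0 := by
    intro i j hij
    have : 12 * (c - c') / 25 ≠ 0 := by
      refine div_ne_zero (mul_ne_zero (by norm_num) hcc) (by norm_num)
    fin_cases i <;> fin_cases j
    · exact absurd rfl hij
    · exact this
    · exact this
    · exact absurd rfl hij
  let A : Matrix (Fin N ⊕ Fin 2) (Fin N ⊕ Fin 2) ℝ :=
    Matrix.fromBlocks (Wᵀ * diagonal t * W) (Wᵀ * B) (Wᵀ * B)ᵀ C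
  refine ⟨A, ⟨?_, ?_⟩, ?_⟩
  · refine Matrix.IsSymm.fromBlocks ?_ rfl hCs
    simp [Matrix.IsSymm, Matrix.transpose_mul, Matrix.mul_assoc]
  · rintro (i | i) (j | j) hij
    · rw [join_ll, SimpleGraph.pathGraph_adj]
      exact hT i j fun h => hij (by rw [h])
    · exact ⟨fun _ => join_lr _ _ _ _, fun _ => hB i j⟩
    · exact ⟨fun _ => join_rl _ _ _ _, fun _ => hB j i⟩
    · rw [join_rr]
      have : i ≠ j := fun h => hij (by rw [h])
      exact ⟨fun _ => this, fun _ => hC i j this⟩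
  · intro μ hμ
    have hroot : A.charpoly.IsRoot μ := Polynomial.isRoot_of_mem_roots hμ
    rw [Polynomial.IsRoot, Matrix.eval_charpoly] at hroot
    obtain ⟨x, hx0, hx⟩ := exists_mulVec_eq_zero_iff.mpr hroot
    rw [Matrix.sub_mulVec, sub_eq_zero] at hx
    have hx' : A *ᵥ x = μ • x := by
      rw [← hx]; ext s; simp [Matrix.scalar_apply, Matrix.mulVec_diagonal]
    let u : Fin N → ℝ := x ∘ Sum.inl
    let z : Fin 2 → ℝ := x ∘ Sum.inr
    have hxs : x = Sum.elim u z := by ext s; rcases s with s | s <;> rfl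
    rw [hxs, Matrix.fromBlocks_mulVec] at hx'
    have hu : (Wᵀ * diagonal t * W) *ᵥ u + (Wᵀ * B) *ᵥ z = μ • u := by
      ext s; exact congrFun hx' (Sum.inl s)
    have hz : (Wᵀ * B)ᵀ *ᵥ u + C *ᵥ z = μ • z := by
      ext s; exact congrFun hx' (Sum.inr s)
    set w := W *ᵥ u with hwdef
    have hwu : Wᵀ *ᵥ w = u := by rw [hwdef, Matrix.mulVec_mulVec, hW, Matrix.one_mulVec]
    have hw : diagonal t *ᵥ w + B *ᵥ z = μ • w := by
      have := congrArg (fun y => W *ᵥ y) hu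
      simp only [Matrix.mulVec_add, Matrix.mulVec_mulVec, Matrix.mulVec_smul] at this
      rw [Matrix.mul_assoc Wᵀ, ← Matrix.mul_assoc W, hW', Matrix.one_mul, ← Matrix.mul_assoc W, hW',
        Matrix.one_mul, ← Matrix.mulVec_mulVec] at this
      exact this
    rw [Matrix.transpose_mul, Matrix.transpose_transpose, ← Matrix.mulVec_mulVec, ← hwdef] at hz
    -- coordinates
    let y : Fin (k + 2) ⊕ (Fin (k + 1) ⊕ Fin (k + 1)) → ℝ := w ∘ e.symm
    have hrow : ∀ s, t0 s * y s + (g₁ s * z 0 + g₂ s * z 1) = μ * y s := by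
      intro s
      have := congrFun hw (e.symm s)
      rw [Pi.add_apply, Matrix.mulVec_diagonal, Pi.smul_apply, Matrix.mulVec, dotProduct,
        Fin.sum_univ_two] at this
      simpa [t, B, y] using this
    have hsum : ∀ g : Fin (k + 2) ⊕ (Fin (k + 1) ⊕ Fin (k + 1)) → ℝ,
        ∑ j, g (e j) * w j = ∑ s, g s * y s := by
      intro g
      rw [← e.sum_comp]
      simp [y]
    have hz0 : ∑ s, g₁ s * y s + ((9 * c + 16 * c') / 25 * z 0 + 12 * (c - c') / 25 * z 1)
        = μ * z 0 := by
      have := congrFun hz 0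
      rw [← hsum]
      rw [Pi.add_apply, Matrix.mulVec, Matrix.mulVec, dotProduct, dotProduct,
        Fin.sum_univ_two] at this
      exact this
    have hz1 : ∑ s, g₂ s * y s + (12 * (c - c') / 25 * z 0 + (16 * c + 9 * c') / 25 * z 1)
        = μ * z 1 := by
      have := congrFun hz 1
      rw [← hsum]
      rw [Pi.add_apply, Matrix.mulVec, Matrix.mulVec, dotProduct, dotProduct,
        Fin.sum_univ_two] at this
      exact this
    rw [Fintype.sum_sum_type, Fintype.sum_sum_type] at hz0 hz1
    simp only [g₁, g₂, Sum.elim_inl, Sum.elim_inr, Pi.zero_apply, zero_mul, Finset.sum_const_zero,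
      zero_add, mul_assoc, ← Finset.mul_sum] at hz0 hz1
    by_contra hcon
    have hcase1 : z 0 * (3 / 5) + z 1 * (4 / 5) = 0 ∧ ∀ j, y (Sum.inr (Sum.inl j)) = 0 := by
      by_contra hne
      refine hcon (harr μ (fun j => y (Sum.inr (Sum.inl j))) (z 0 * (3 / 5) + z 1 * (4 / 5)) ?_ ?_ ?_)
      · intro j
        have := hrow (Sum.inr (Sum.inl j))
        simp only [t0, g₁, g₂, Sum.elim_inl, Sum.elim_inr] at this
        linear_combination this
      · linear_combination 3 / 5 * hz0 + 4 / 5 * hz1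
      · by_contra h
        push Not at h
        exact hne h
    have hcase2 : z 0 * (4 / 5) - z 1 * (3 / 5) = 0 ∧ ∀ j, y (Sum.inr (Sum.inr j)) = 0 := by
      by_contra hne
      refine hcon (harr' μ (fun j => y (Sum.inr (Sum.inr j))) (z 0 * (4 / 5) - z 1 * (3 / 5)) ?_ ?_ ?_)
      · intro j
        have := hrow (Sum.inr (Sum.inr j))
        simp only [t0, g₁, g₂, Sum.elim_inl, Sum.elim_inr] at this
        linear_combination this
      · linear_combination 4 / 5 * hz0 - 3 / 5 * hz1
      · by_contra h
        push Not at h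
        exact hne h
    have hcase0 : ∀ i, y (Sum.inl i) = 0 := by
      intro i
      by_contra hne
      have := hrow (Sum.inl i)
      simp only [t0, g₁, g₂, Sum.elim_inl, Pi.zero_apply, zero_mul, add_zero] at this
      exact hcon ⟨i, (mul_right_cancel₀ hne this).symm⟩
    have hy : ∀ s, y s = 0 := by
      rintro (i | i | i)
      · exact hcase0 i
      · exact hcase1.2 i
      · exact hcase2.2 i
    have hw0 : w = 0 := by
      ext j
      have := hy (e j)
      simpa [y] using this
    apply hx0
    rw [hxs]
    ext s
    rcases s with s | s
    · rw [Sum.elim_inl, ← hwu, hw0, Matrix.mulVec_zero]; rfl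
    · rw [Sum.elim_inr, Pi.zero_apply]
      have e1 := hcase1.1
      have e2 := hcase2.1
      fin_cases s
      · change z 0 = 0; linarith
      · change z 1 = 0; linarith

/-- Remark 3.14: for `m = k + 2 ≥ 2`, every eigenvalue of every matrix in
`S(P_{3m−2} ∨ K₂)` has multiplicity at most `3`, and `q(P_{3m−2} ∨ K₂) = m`. -/
theorem statement19 (k : ℕ) :
    (∀ A : Matrix (Fin (3 * (k + 2) - 2) ⊕ Fin 2) (Fin (3 * (k + 2) - 2) ⊕ Fin 2) ℝ,
      inS (graphJoin (SimpleGraph.pathGraph (3 * (k + 2) - 2))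
        (⊤ : SimpleGraph (Fin 2))) A →
      ∀ μ : ℝ, Multiset.count μ (specMultiset A) ≤ 3) ∧
    qGraph (graphJoin (SimpleGraph.pathGraph (3 * (k + 2) - 2))
      (⊤ : SimpleGraph (Fin 2))) = k + 2 := by
  have hN : 0 < 3 * (k + 2) - 2 := by omega
  have hmult := fun A hA μ => (mult_le hN A hA μ).1
  refine ⟨hmult, ?_⟩
  have hlow : ∀ A, inS (graphJoin (SimpleGraph.pathGraph (3 * (k + 2) - 2))
      (⊤ : SimpleGraph (Fin 2))) A → k + 2 ≤ qMat A := by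
    intro A hA
    have h1 := (mult_le hN A hA 0).2
    have h2 : Multiset.card (specMultiset A) ≤ (specMultiset A).toFinset.card * 3 := by
      rw [← Multiset.toFinset_sum_count_eq]
      exact Finset.sum_le_card_nsmul _ _ 3 fun μ _ => hmult A hA μ
    rw [h1] at h2
    change _ ≤ (specMultiset A).toFinset.card
    omega
  obtain ⟨A, hA, hspec⟩ := exists_good k
  have hup : qMat A ≤ k + 2 := by
    have hsub : (specMultiset A).toFinset ⊆
        Finset.univ.image (fun i : Fin (k + 2) => ((i : ℕ) : ℝ)) := by
      intro μ hμ
      obtain ⟨i, hi⟩ := hspec μ (Multiset.mem_toFinset.mp hμ)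
      exact Finset.mem_image.mpr ⟨i, Finset.mem_univ i, hi.symm⟩
    refine (Finset.card_le_card hsub).trans (Finset.card_image_le.trans ?_)
    simp
  apply le_antisymm
  · refine le_trans (Nat.sInf_le ?_) hup
    exact ⟨A, hA, rfl⟩
  · refine le_csInf ⟨_, A, hA, rfl⟩ ?_
    rintro q ⟨A', hA', rfl⟩
    exact hlow A' hA'
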